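/- Let (M,E,η) be a factorable monoid satisfying the stronger conditions η′(x·s) = η′(η′(x)·s) and η̄(x·s) = η̄(x)·η̄(η′(x)·s) for all x ∈ M and s ∈ E. Then for words I, J ∈ F_n with I ∼ J (equivalence in Q_n') and any tuple (x_{n+1},…,x_1) ∈ E^{n+1} of generators, f_I(x_{n+1},…,x_1) = f_J(x_{n+1},…,x_1), where for I = (i_s,…,i_1) one sets f_I = f_{i_s}∘⋯∘f_{i_1} : M^{n+1} → M^{n+1}. -/

import Mathlib

/-- The word length of `m` with respect to the generating set `E`:
the least `n` such that `m` is a product of `n` elements of `E`. -/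
noncomputable def wordLength {M : Type*} [Monoid M] (E : Set M) (m : M) : ℕ :=
  sInf {n | ∃ l : List M, (∀ x ∈ l, x ∈ E) ∧ l.length = n ∧ l.prod = m}

/-- `E` is a generating set of the monoid `M`. -/
def IsGenSet {M : Type*} [Monoid M] (E : Set M) : Prop :=
  ∀ m : M, ∃ l : List M, (∀ x ∈ l, x ∈ E) ∧ l.prod = m

/-- The pair `(a, b)` is geodesic with respect to `E`. -/
noncomputable def Geodesic {M : Type*} [Monoid M] (E : Set M) (a b : M) : Prop :=
  wordLength E (a * b) = wordLength E a + wordLength E b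

/-- A factorization map `η = (η̄, η′)` on `(M, E)`. -/
noncomputable def IsFactorizationMap {M : Type*} [Monoid M] (E : Set M)
    (η : M → M × M) : Prop :=
  (∀ m, (η m).1 * (η m).2 = m) ∧
  (∀ m, wordLength E m = wordLength E (η m).1 + wordLength E (η m).2) ∧
  (∀ m, m ≠ 1 → (η m).2 ∈ E) ∧
  η 1 = (1, 1)

/-- The map `f₁ : M³ → M³` applying `η` to the product of the two right entries,
with triples written `(x₃, x₂, x₁)`. -/
def f1 {M : Type*} [Monoid M] (η : M → M × M) (p : M × M × M) : M × M × M :=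
  (p.1, η (p.2.1 * p.2.2))

/-- The map `f₂ : M³ → M³` applying `η` to the product of the two left entries. -/
def f2 {M : Type*} [Monoid M] (η : M → M × M) (p : M × M × M) : M × M × M :=
  ((η (p.1 * p.2.1)).1, (η (p.1 * p.2.1)).2, p.2.2)

/-- The sum of the word lengths of the entries of a triple. -/
noncomputable def tnorm {M : Type*} [Monoid M] (E : Set M) (p : M × M × M) : ℕ :=
  wordLength E p.1 + wordLength E p.2.1 + wordLength E p.2.2

/-- `η` is a factorability structure on `(M, E)`: it is a factorization map and the
three maps `f₁f₂f₁f₂`, `f₂f₁f₂`, `f₂f₁f₂f₁ : M³ → M³` are equal in the graded sense. -/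
noncomputable def IsFactorable {M : Type*} [Monoid M] (E : Set M) (η : M → M × M) : Prop :=
  IsFactorizationMap E η ∧
  ∀ p : M × M × M,
    (f1 η (f2 η (f1 η (f2 η p))) = f2 η (f1 η (f2 η p)) ∧
     f2 η (f1 η (f2 η p)) = f2 η (f1 η (f2 η (f1 η p)))) ∨
    (tnorm E (f1 η (f2 η (f1 η (f2 η p)))) < tnorm E p ∧
     tnorm E (f2 η (f1 η (f2 η p))) < tnorm E p ∧
     tnorm E (f2 η (f1 η (f2 η (f1 η p)))) < tnorm E p)

/-- `η` is a weak factorability structure on `(M, E)`. -/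
noncomputable def IsWeaklyFactorable {M : Type*} [Monoid M] (E : Set M)
    (η : M → M × M) : Prop :=
  IsFactorizationMap E η ∧
  ∀ x : M, ∀ t ∈ E,
    Geodesic E (η x).2 t →
    Geodesic E (η x).1 (η ((η x).2 * t)).1 →
    Geodesic E x t ∧
    (η (x * t)).2 = (η ((η x).2 * t)).2 ∧
    (η (x * t)).1 = (η x).1 * (η ((η x).2 * t)).1

/-- `η` satisfies the recognition principle. -/
def RecognitionPrinciple {M : Type*} [Monoid M] (E : Set M) (η : M → M × M) : Prop :=
  ∀ m : M, ∀ a ∈ E, (η (m * a) = (m, a) ↔ η ((η m).2 * a) = ((η m).2, a))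


/-- `w` is a word of the free monoid `F_n` on the letters `{1, …, n}`. -/
def InF (n : ℕ) (w : List ℕ) : Prop := ∀ a ∈ w, 1 ≤ a ∧ a ≤ n

/-- The congruence on a free monoid of words generated by a relation `r`. -/
inductive CongClosure (r : List ℕ → List ℕ → Prop) : List ℕ → List ℕ → Prop
  | rel (u v : List ℕ) {x y : List ℕ} : r x y → CongClosure r (u ++ x ++ v) (u ++ y ++ v)
  | refl (x : List ℕ) : CongClosure r x x
  | symm {x y : List ℕ} : CongClosure r x y → CongClosure r y x
  | trans {x y z : List ℕ} : CongClosure r x y → CongClosure r y z → CongClosure r x z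

/-- The defining relations of `P_n`: `ab = ba` for `|a − b| ≥ 2`, and `aa = a`. -/
inductive PRel (n : ℕ) : List ℕ → List ℕ → Prop
  | comm (a b : ℕ) : 1 ≤ a → a ≤ n → 1 ≤ b → b ≤ n → (a + 2 ≤ b ∨ b + 2 ≤ a) →
      PRel n [a, b] [b, a]
  | idem (a : ℕ) : 1 ≤ a → a ≤ n → PRel n [a, a] [a]

/-- The congruence `∼_P` on `F_n`. -/
def PCong (n : ℕ) : List ℕ → List ℕ → Prop := CongClosure (PRel n)

/-- The defining relations of `Q_n`: those of `P_n` together with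
`k(k+1)k(k+1) = (k+1)k(k+1)` and `(k+1)k(k+1)k = (k+1)k(k+1)`. -/
inductive QRel (n : ℕ) : List ℕ → List ℕ → Prop
  | ofP {x y : List ℕ} : PRel n x y → QRel n x y
  | braid1 (k : ℕ) : 1 ≤ k → k + 1 ≤ n → QRel n [k, k + 1, k, k + 1] [k + 1, k, k + 1]
  | braid2 (k : ℕ) : 1 ≤ k → k + 1 ≤ n → QRel n [k + 1, k, k + 1, k] [k + 1, k, k + 1]

/-- The congruence `∼_Q` on `F_n`. -/
def QCong (n : ℕ) : List ℕ → List ℕ → Prop := CongClosure (QRel n)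

/-- The defining relations of `Q_n'`: those of `Q_n` together with the pairs `(kJ, J)`
for which there exists `I ∈ F_n` with `kIJ ∼_Q IJ`, `kI ∼_P Ik` and `k` not occurring
in `I`. -/
inductive RRel (n : ℕ) : List ℕ → List ℕ → Prop
  | ofQ {x y : List ℕ} : QRel n x y → RRel n x y
  | absorb (k : ℕ) (I J : List ℕ) : 1 ≤ k → k ≤ n → InF n I → InF n J →
      QCong n ((k :: I) ++ J) (I ++ J) → PCong n (k :: I) (I ++ [k]) → k ∉ I →
      RRel n (k :: J) J

/-- The congruence `∼` on `F_n`; the quotient monoid `F_n/∼` is `Q_n'`. -/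
def RCong (n : ℕ) : List ℕ → List ℕ → Prop := CongClosure (RRel n)

/-- The shift homomorphism `sh_k : F_{n−k} → F_n`, `i ↦ i + k`. -/
def sh (k : ℕ) (w : List ℕ) : List ℕ := w.map (· + k)

/-- The word `I_a^b = a·(a+1)⋯b`. -/
def Iseg (a b : ℕ) : List ℕ := List.range' a (b + 1 - a)

/-- The map `f_i : M^{n+1} → M^{n+1}` on tuples `(x_{n+1}, …, x_1)` (encoded as
functions `ℕ → M`, the entry `x_j` being the value at `j`): it replaces the pair
`(x_{i+1}, x_i)` by `(η̄(x_{i+1}·x_i), η′(x_{i+1}·x_i))`. -/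
def fApply {M : Type*} [Monoid M] (η : M → M × M) (i : ℕ) (v : ℕ → M) : ℕ → M :=
  fun j =>
    if j = i + 1 then (η (v (i + 1) * v i)).1
    else if j = i then (η (v (i + 1) * v i)).2
    else v j

/-- For a word `I = (i_s, …, i_1)` (a list with `i_s` first), the composition
`f_I = f_{i_s} ∘ ⋯ ∘ f_{i_1}`. -/
def fWord {M : Type*} [Monoid M] (η : M → M × M) (I : List ℕ) (v : ℕ → M) : ℕ → M :=
  I.foldr (fun i w => fApply η i w) v

section WordLength

variable {M : Type*} [Monoid M] {E : Set M}

theorem wordLength_le_length {l : List M} (hl : ∀ x ∈ l, x ∈ E) :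
    wordLength E l.prod ≤ l.length :=
  Nat.sInf_le ⟨l, hl, rfl, rfl⟩

theorem IsGenSet.exists_length_eq_wordLength (hgen : IsGenSet E) (m : M) :
    ∃ l : List M, (∀ x ∈ l, x ∈ E) ∧ l.length = wordLength E m ∧ l.prod = m := by
  obtain ⟨l, hl, hm⟩ := hgen m
  exact Nat.sInf_mem (s := {n | ∃ l : List M, (∀ x ∈ l, x ∈ E) ∧ l.length = n ∧ l.prod = m})
    ⟨l.length, l, hl, rfl, hm⟩

theorem IsGenSet.wordLength_mul_le (hgen : IsGenSet E) (a b : M) :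
    wordLength E (a * b) ≤ wordLength E a + wordLength E b := by
  obtain ⟨l, hl, hla, rfl⟩ := hgen.exists_length_eq_wordLength a
  obtain ⟨l', hl', hlb, rfl⟩ := hgen.exists_length_eq_wordLength b
  rw [← hla, ← hlb, ← List.prod_append, ← List.length_append]
  refine wordLength_le_length fun x hx => ?_
  rcases List.mem_append.1 hx with h | h
  exacts [hl x h, hl' x h]

theorem wordLength_one : wordLength E (1 : M) = 0 := by
  simpa using wordLength_le_length (E := E) (l := []) (by simp)

theorem IsGenSet.eq_one_of_wordLength_eq_zero (hgen : IsGenSet E) {m : M}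
    (h : wordLength E m = 0) : m = 1 := by
  obtain ⟨l, -, hlen, rfl⟩ := hgen.exists_length_eq_wordLength m
  rw [h, List.length_eq_zero_iff] at hlen
  simp [hlen]

theorem IsGenSet.wordLength_le_one_iff (hgen : IsGenSet E) {m : M} :
    wordLength E m ≤ 1 ↔ m = 1 ∨ m ∈ E := by
  constructor
  · intro h
    obtain ⟨l, hl, hlen, rfl⟩ := hgen.exists_length_eq_wordLength m
    match l with
    | [] => simp
    | [a] => exact Or.inr (by simpa using hl)
    | a :: b :: t =>
      rw [← hlen] at h
      simp at h
  · rintro (rfl | h)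
    · simp [wordLength_one]
    · simpa using wordLength_le_length (E := E) (l := [m]) (by simpa using h)

theorem IsGenSet.wordLength_of_mem (hgen : IsGenSet E) (h1 : (1 : M) ∉ E) {m : M} (hm : m ∈ E) :
    wordLength E m = 1 := by
  have hle := hgen.wordLength_le_one_iff.2 (Or.inr hm)
  have hne : wordLength E m ≠ 0 := fun h =>
    h1 (hgen.eq_one_of_wordLength_eq_zero h ▸ hm)
  omega

end WordLength

section Factorization

variable {M : Type*} [Monoid M] {E : Set M} {η : M → M × M}

theorem IsFactorizationMap.snd_eq_one_or_mem (hη : IsFactorizationMap E η) (m : M) :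
    (η m).2 = 1 ∨ (η m).2 ∈ E := by
  obtain ⟨-, -, hmem, hone⟩ := hη
  by_cases hm : m = 1
  · simp [hm, hone]
  · exact Or.inr (hmem m hm)

theorem IsFactorizationMap.apply_generator (hη : IsFactorizationMap E η) (hgen : IsGenSet E)
    (h1 : (1 : M) ∉ E) {e : M} (he : e = 1 ∨ e ∈ E) : η e = (1, e) := by
  obtain ⟨hmul, hlen, hmem, hone⟩ := hη
  rcases he with rfl | he
  · exact hone
  · have hsnd := hgen.wordLength_of_mem h1 (hmem e fun h => h1 (h ▸ he))
    have hfst : (η e).1 = 1 := by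
      apply hgen.eq_one_of_wordLength_eq_zero (E := E)
      have := hlen e
      rw [hgen.wordLength_of_mem h1 he] at this
      omega
    have := hmul e
    rw [hfst, one_mul] at this
    exact Prod.ext hfst this

theorem IsFactorizationMap.fst_mul_eq_one_or_mem (hη : IsFactorizationMap E η)
    (hgen : IsGenSet E) (h1 : (1 : M) ∉ E) {x y : M} (hx : x = 1 ∨ x ∈ E) (hy : y = 1 ∨ y ∈ E) :
    (η (x * y)).1 = 1 ∨ (η (x * y)).1 ∈ E := by
  obtain ⟨-, hlen, hmem, hone⟩ := hη
  by_cases hxy : x * y = 1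
  · simp [hxy, hone]
  · rw [← hgen.wordLength_le_one_iff] at hx hy ⊢
    have hsnd := hgen.wordLength_of_mem h1 (hmem _ hxy)
    have := hlen (x * y)
    have := hgen.wordLength_mul_le x y
    omega

/-- The strong factorability condition `η(x·s) = (η̄(x)·η̄(η′(x)·s), η′(η′(x)·s))`, where `s`
is a generator or the unit. -/
def IsStrong (E : Set M) (η : M → M × M) : Prop :=
  ∀ x s : M, s = 1 ∨ s ∈ E →
    (η (x * s)).2 = (η ((η x).2 * s)).2 ∧ (η (x * s)).1 = (η x).1 * (η ((η x).2 * s)).1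

theorem IsFactorizationMap.isStrong (hη : IsFactorizationMap E η) (hgen : IsGenSet E)
    (h1 : (1 : M) ∉ E)
    (hstrong : ∀ x : M, ∀ s ∈ E,
      (η (x * s)).2 = (η ((η x).2 * s)).2 ∧
      (η (x * s)).1 = (η x).1 * (η ((η x).2 * s)).1) : IsStrong E η := by
  rintro x s (rfl | hs)
  · have := hη.apply_generator hgen h1 (hη.snd_eq_one_or_mem x)
    simp [this]
  · exact hstrong x s hs

/-- The last two letters of the normal form of `m` are in normal form. -/
theorem IsFactorable.apply_normalForm (hfac : IsFactorable E η) (hs : IsStrong E η) (m : M) :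
    η ((η (η m).1).2 * (η m).2) = ((η (η m).1).2, (η m).2) := by
  obtain ⟨hη, hgraded⟩ := hfac
  obtain ⟨hsnd, hfst⟩ := hs (η m).1 (η m).2 (hη.snd_eq_one_or_mem m)
  have hmul := hη.1
  rw [hmul] at hsnd hfst
  set a := (η m).1
  set d := (η m).2
  have hf2 : f2 η ((η a).1, (η a).2, d) = ((η a).1, (η a).2, d) := by
    simp [f2, hmul]
  have hf21 : f2 η (f1 η ((η a).1, (η a).2, d)) = ((η a).1, (η a).2, d) := by
    simp [f2, f1, ← hfst, ← hsnd]
  have key : f1 η ((η a).1, (η a).2, d) = ((η a).1, (η a).2, d) := by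
    rcases hgraded ((η a).1, (η a).2, d) with ⟨h, -⟩ | ⟨-, h, -⟩
    · simpa only [hf2, hf21] using h
    · rw [hf2, hf21] at h
      exact absurd h (lt_irrefl _)
  exact congrArg Prod.snd key

end Factorization

section Tuples

variable {M : Type*} [Monoid M] {E : Set M} {η : M → M × M}

theorem fWord_append (η : M → M × M) (I J : List ℕ) (v : ℕ → M) :
    fWord η (I ++ J) v = fWord η I (fWord η J v) := by
  simp [fWord]

theorem fWord_cons (η : M → M × M) (i : ℕ) (I : List ℕ) (v : ℕ → M) :
    fWord η (i :: I) v = fApply η i (fWord η I v) := rfl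

theorem fWord_nil (η : M → M × M) (v : ℕ → M) : fWord η [] v = v := rfl

theorem fApply_comm (η : M → M × M) {a b : ℕ} (h : a + 2 ≤ b) (v : ℕ → M) :
    fApply η a (fApply η b v) = fApply η b (fApply η a v) := by
  funext j
  grind [fApply]

theorem fApply_idem (hη : IsFactorizationMap E η) (a : ℕ) (v : ℕ → M) :
    fApply η a (fApply η a v) = fApply η a v := by
  funext j
  simp only [fApply]
  have := hη.1 (v (a + 1) * v a)
  grind

/-- `f_{k+1} f_k f_{k+1}` puts the product of three consecutive entries in normal form. -/
theorem fApply_braid (hs : IsStrong E η) (k : ℕ) (v : ℕ → M)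
    (hv : v k = 1 ∨ v k ∈ E) :
    fApply η (k + 1) (fApply η k (fApply η (k + 1) v)) = fun j =>
      if j = k + 2 then (η (η (v (k + 2) * v (k + 1) * v k)).1).1
      else if j = k + 1 then (η (η (v (k + 2) * v (k + 1) * v k)).1).2
      else if j = k then (η (v (k + 2) * v (k + 1) * v k)).2
      else v j := by
  obtain ⟨hsnd, hfst⟩ := hs (v (k + 2) * v (k + 1)) (v k) hv
  funext j
  simp only [fApply]
  grind

/-- All entries of `v` at the positions `1, …, n + 1` are generators or the unit. -/
def IsGeneratorTuple (E : Set M) (n : ℕ) (v : ℕ → M) : Prop :=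
  ∀ j, 1 ≤ j → j ≤ n + 1 → v j = 1 ∨ v j ∈ E

theorem IsGeneratorTuple.fApply (hη : IsFactorizationMap E η) (hgen : IsGenSet E)
    (h1 : (1 : M) ∉ E) {n i : ℕ} (hi : 1 ≤ i) (hin : i ≤ n) {v : ℕ → M}
    (hv : IsGeneratorTuple E n v) : IsGeneratorTuple E n (fApply η i v) := by
  intro j hj hjn
  unfold _root_.fApply
  split_ifs
  · exact hη.fst_mul_eq_one_or_mem hgen h1 (hv _ (by omega) (by omega)) (hv _ hi (by omega))
  · exact hη.snd_eq_one_or_mem _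
  · exact hv j hj hjn

theorem IsGeneratorTuple.fWord (hη : IsFactorizationMap E η) (hgen : IsGenSet E)
    (h1 : (1 : M) ∉ E) {n : ℕ} {I : List ℕ} (hI : InF n I) {v : ℕ → M}
    (hv : IsGeneratorTuple E n v) : IsGeneratorTuple E n (fWord η I v) := by
  induction I with
  | nil => exact hv
  | cons i I ih =>
    obtain ⟨hi, hin⟩ := hI i (by simp)
    exact (ih fun a ha => hI a (by simp [ha])).fApply hη hgen h1 hi hin

theorem fWord_apply_of_notMem (η : M → M × M) {I : List ℕ} {j : ℕ}
    (hI : ∀ i ∈ I, i ≠ j ∧ i + 1 ≠ j) (v : ℕ → M) : fWord η I v j = v j := by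
  induction I with
  | nil => rfl
  | cons i I ih =>
    have := hI i (by simp)
    rw [fWord_cons, fApply, if_neg this.2.symm, if_neg this.1.symm]
    exact ih fun a ha => hI a (by simp [ha])

end Tuples

section Congruences

theorem inF_append {n : ℕ} {u v : List ℕ} : InF n (u ++ v) ↔ InF n u ∧ InF n v :=
  List.forall_mem_append

theorem inF_cons {n a : ℕ} {u : List ℕ} : InF n (a :: u) ↔ (1 ≤ a ∧ a ≤ n) ∧ InF n u := by
  simp [InF]

theorem inF_nil {n : ℕ} : InF n [] := by simp [InF]

theorem PRel.inF {n : ℕ} {x y : List ℕ} (h : PRel n x y) : InF n x ∧ InF n y := by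
  cases h <;> simp_all [inF_cons, inF_nil]

theorem QRel.inF {n : ℕ} {x y : List ℕ} (h : QRel n x y) : InF n x ∧ InF n y := by
  cases h with
  | ofP h => exact h.inF
  | braid1 k hk hkn => simp only [inF_cons, inF_nil, and_true]; omega
  | braid2 k hk hkn => simp only [inF_cons, inF_nil, and_true]; omega

theorem RRel.inF {n : ℕ} {x y : List ℕ} (h : RRel n x y) : InF n x ∧ InF n y := by
  cases h with
  | ofQ h => exact h.inF
  | absorb k I J hk hkn _ hJ => exact ⟨inF_cons.2 ⟨⟨hk, hkn⟩, hJ⟩, hJ⟩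

theorem PCong.qCong {n : ℕ} {x y : List ℕ} (h : PCong n x y) : QCong n x y := by
  induction h with
  | rel u v h => exact .rel u v (.ofP h)
  | refl x => exact .refl x
  | symm _ ih => exact ih.symm
  | trans _ _ ih ih' => exact ih.trans ih'

/-- For letters `a`, `b` with `|a − b| ≤ 1`, congruent words in `P_n` have the same first letter
among `a` and `b`. -/
theorem PCong.find?_eq {n a b : ℕ} (hab : a ≤ b + 1) (hba : b ≤ a + 1) {x y : List ℕ}
    (h : PCong n x y) :
    x.find? (fun c => c = a ∨ c = b) = y.find? (fun c => c = a ∨ c = b) := by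
  induction h with
  | rel u v h =>
    simp only [List.find?_append]
    congr 2
    cases h with
    | comm c d _ _ _ _ hcd => grind
    | idem c => grind
  | refl x => rfl
  | symm _ ih => exact ih.symm
  | trans _ _ ih ih' => exact ih.trans ih'

theorem PCong.notMem_of_commute {n k b : ℕ} (hbk : b ≠ k) (hkb : k ≤ b + 1) (hbk' : b ≤ k + 1)
    {I : List ℕ} (h : PCong n (k :: I) (I ++ [k])) (hk : k ∉ I) : b ∉ I := by
  intro hb
  have hfind := h.find?_eq hkb hbk'
  have hI : I.find? (fun c => c = k ∨ c = b) = some b := by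
    rw [Option.eq_some_iff_get_eq]
    have hsome : (I.find? (fun c => c = k ∨ c = b)).isSome := by
      simp only [List.find?_isSome]
      exact ⟨b, hb, by simp⟩
    refine ⟨hsome, ?_⟩
    have hq := List.find?_some (Option.some_get hsome).symm
    grind
  rw [List.find?_append, hI] at hfind
  simp at hfind
  exact hbk hfind.symm

variable {M : Type*} [Monoid M] {E : Set M} {η : M → M × M}

theorem CongClosure.fWord_eq (hη : IsFactorizationMap E η) (hgen : IsGenSet E)
    (h1 : (1 : M) ∉ E) {n : ℕ} {r : List ℕ → List ℕ → Prop}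
    (hr : ∀ x y, r x y → InF n x ∧ InF n y)
    (heval : ∀ x y, r x y → ∀ v, IsGeneratorTuple E n v → fWord η x v = fWord η y v)
    {x y : List ℕ} (h : CongClosure r x y) :
    (InF n x ↔ InF n y) ∧
      (InF n x → ∀ v, IsGeneratorTuple E n v → fWord η x v = fWord η y v) := by
  induction h with
  | rel u w h =>
    have hxy := hr _ _ h
    refine ⟨by simp [inF_append, hxy], fun hu v hv => ?_⟩
    simp only [inF_append] at hu
    simp only [fWord_append]
    rw [heval _ _ h _ (hv.fWord hη hgen h1 hu.2)]
  | refl x => exact ⟨Iff.rfl, fun _ _ _ => rfl⟩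
  | symm _ ih => exact ⟨ih.1.symm, fun hy v hv => (ih.2 (ih.1.2 hy) v hv).symm⟩
  | trans _ _ ih ih' =>
    exact ⟨ih.1.trans ih'.1, fun hx v hv => (ih.2 hx v hv).trans (ih'.2 (ih.1.1 hx) v hv)⟩

theorem QRel.fWord_eq (hfac : IsFactorable E η) (hs : IsStrong E η) {n : ℕ}
    {x y : List ℕ} (h : QRel n x y) (v : ℕ → M) (hv : IsGeneratorTuple E n v) :
    fWord η x v = fWord η y v := by
  have hη := hfac.1
  cases h with
  | ofP h =>
    cases h with
    | comm a b _ _ _ _ hab =>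
      rcases hab with hab | hab
      · exact fApply_comm η hab v
      · exact (fApply_comm η hab v).symm
    | idem a => exact fApply_idem hη a v
  | braid1 k hk hkn =>
    simp only [fWord_cons, fWord_nil]
    rw [fApply_braid hs k v (hv k hk (by omega))]
    have hnf := hfac.apply_normalForm hs (v (k + 2) * v (k + 1) * v k)
    funext j
    simp only [fApply]
    grind
  | braid2 k hk hkn =>
    simp only [fWord_cons, fWord_nil]
    have hk' : fApply η k v k = (η (v (k + 1) * v k)).2 := by simp [fApply]
    rw [fApply_braid hs k v (hv k hk (by omega)),
      fApply_braid hs k _ (hk' ▸ hη.snd_eq_one_or_mem _)]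
    have hprod : fApply η k v (k + 2) * fApply η k v (k + 1) * fApply η k v k =
        v (k + 2) * v (k + 1) * v k := by
      have := hη.1 (v (k + 1) * v k)
      simp [fApply, mul_assoc, this]
    rw [hprod]
    funext j
    grind [fApply]

theorem QCong.fWord_eq (hfac : IsFactorable E η) (hgen : IsGenSet E) (h1 : (1 : M) ∉ E)
    (hs : IsStrong E η) {n : ℕ} {x y : List ℕ} (h : QCong n x y) (hx : InF n x) (v : ℕ → M)
    (hv : IsGeneratorTuple E n v) : fWord η x v = fWord η y v :=
  (CongClosure.fWord_eq hfac.1 hgen h1 (fun _ _ => QRel.inF)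
    (fun _ _ h => h.fWord_eq hfac hs) h).2 hx v hv

theorem RRel.fWord_eq (hfac : IsFactorable E η) (hgen : IsGenSet E) (h1 : (1 : M) ∉ E)
    (hs : IsStrong E η) {n : ℕ} {x y : List ℕ} (h : RRel n x y) (v : ℕ → M)
    (hv : IsGeneratorTuple E n v) : fWord η x v = fWord η y v := by
  cases h with
  | ofQ h => exact h.fWord_eq hfac hs v hv
  | absorb k I _ hk hkn hI hy hQ hP hkI =>
    have hw := hv.fWord hfac.1 hgen h1 hy
    have hkI' : InF n (k :: I) := inF_cons.2 ⟨⟨hk, hkn⟩, hI⟩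
    have hQ' := QCong.fWord_eq hfac hgen h1 hs hQ (inF_append.2 ⟨hkI', hy⟩) v hv
    have hP' := QCong.fWord_eq hfac hgen h1 hs hP.qCong hkI' _ hw
    rw [fWord_append, hP', fWord_append, fWord_append, fWord_cons, fWord_nil] at hQ'
    rw [fWord_cons]
    have hsucc : k + 1 ∉ I := hP.notMem_of_commute (by omega) (by omega) (by omega) hkI
    have hpred : ∀ i ∈ I, i + 1 ≠ k := fun i hi hik =>
      hP.notMem_of_commute (b := i) (by omega) (by omega) (by omega) hkI hi
    have hfix : ∀ j, j = k ∨ j = k + 1 → fApply η k (fWord η y v) j = fWord η y v j := by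
      intro j hj
      have hIj : ∀ i ∈ I, i ≠ j ∧ i + 1 ≠ j := by
        intro i hi
        have := hpred i hi
        have : i ≠ k := fun h => hkI (h ▸ hi)
        have : i ≠ k + 1 := fun h => hsucc (h ▸ hi)
        omega
      have := congrFun hQ' j
      rwa [fWord_apply_of_notMem η hIj, fWord_apply_of_notMem η hIj] at this
    funext j
    by_cases hj : j = k ∨ j = k + 1
    · exact hfix j hj
    · push Not at hj
      simp [fApply, hj]

end Congruences

/-- Let `(M, E, η)` be a factorable monoid satisfying the stronger conditions
`η′(x·s) = η′(η′(x)·s)` and `η̄(x·s) = η̄(x)·η̄(η′(x)·s)` for all `x ∈ M`, `s ∈ E`. Then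
for words `I ∼ J` in `F_n` (equivalence in `Q_n'`) and every tuple of generators
`(x_{n+1}, …, x_1) ∈ E^{n+1}` one has `f_I(x_{n+1}, …, x_1) = f_J(x_{n+1}, …, x_1)`. -/
theorem evaluation_lemma_Q'
    {M : Type*} [Monoid M] (E : Set M) (h1 : (1 : M) ∉ E) (hgen : IsGenSet E)
    (η : M → M × M) (hfac : IsFactorable E η)
    (hstrong : ∀ x : M, ∀ s ∈ E,
      (η (x * s)).2 = (η ((η x).2 * s)).2 ∧
      (η (x * s)).1 = (η x).1 * (η ((η x).2 * s)).1) :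
    ∀ (n : ℕ) (I J : List ℕ), InF n I → InF n J → RCong n I J →
      ∀ v : ℕ → M, (∀ j, 1 ≤ j → j ≤ n + 1 → v j ∈ E) →
        fWord η I v = fWord η J v := by
  intro n I J hI _ hIJ v hv
  have hs := hfac.1.isStrong hgen h1 hstrong
  exact (CongClosure.fWord_eq hfac.1 hgen h1 (fun _ _ => RRel.inF)
    (fun _ _ h => h.fWord_eq hfac hgen h1 hs) hIJ).2 hI v fun j hj hjn => Or.inr (hv j hj hjn)
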